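/- Let A be a countably infinite set. There exist enumerations P and Q of Σ_A^fin such that the OTW metrics d_P and d_Q are uniformly equivalent, the Ott–Tomforde–Willis full shift (Σ_A, σ) with domain D = Σ_A ∖ {∅} has the Lipschitz shadowing property with respect to d_P, and it has the shadowing property but NOT the Lipschitz shadowing property with respect to d_Q. -/

import Mathlib

/-- The Ott–Tomforde–Willis full shift `Σ_A = A^ℕ ⊔ Σ_A^fin`: infinite words are
functions `ℕ → A`, finite words (including the empty word `[]`) are lists. -/
abbrev OTWFullShift (A : Type*) := (ℕ → A) ⊕ List A

/-- `u ⪯ x`: the finite word `u` is an initial segment of `x ∈ Σ_A`. -/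
def OTWPre {A : Type*} (u : List A) : OTWFullShift A → Prop
  | Sum.inl f => ∀ i : Fin u.length, u.get i = f i
  | Sum.inr v => u <+: v

/-- The shift map on `Σ_A`: delete the first symbol (finite words of length `≤ 1`
are sent to the empty word). -/
def otwShift {A : Type*} : OTWFullShift A → OTWFullShift A
  | Sum.inl f => Sum.inl fun n => f (n + 1)
  | Sum.inr v => Sum.inr v.tail

/-- The Deaconu–Renault domain `D = Σ_A ∖ {∅}`. -/
def otwDomain (A : Type*) : Set (OTWFullShift A) := {x | x ≠ Sum.inr []}

/-- `P` is an enumeration of `Σ_A^fin` indexed by `{1, 2, 3, …}`: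
`j ↦ P j` is a bijection from `{1, 2, …}` onto the finite words
(the value `P 0` is irrelevant). -/
def IsEnumeration {A : Type*} (P : ℕ → List A) : Prop :=
  Function.Bijective fun k : ℕ => P (k + 1)

open Classical in
/-- The OTW metric attached to the enumeration `P`:
`d_P(x,y) = 2^{-i}` where `i = min{j ≥ 1 : exactly one of P j ⪯ x, P j ⪯ y}`. -/
noncomputable def otwDist {A : Type*} (P : ℕ → List A) (x y : OTWFullShift A) : ℝ :=
  if x = y then 0
  else (1 / 2 : ℝ) ^ sInf {j : ℕ | 1 ≤ j ∧ Xor' (OTWPre (P j) x) (OTWPre (P j) y)}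

/-- A `δ`-pseudo-orbit for the system `(Σ_A, σ, D)` with respect to `d`. -/
def IsDeltaPseudoOrbit {X : Type*} (d : X → X → ℝ) (σ : X → X) (D : Set X)
    (δ : ℝ) (xs : ℕ → X) : Prop :=
  ∀ n : ℕ, xs n ∈ D ∧ d (σ (xs n)) (xs (n + 1)) < δ

/-- The shadowing property for the system `(X, σ, D)` with respect to `d`. -/
def HasShadowing {X : Type*} (d : X → X → ℝ) (σ : X → X) (D : Set X) : Prop :=
  ∀ ε > (0:ℝ), ∃ δ > (0:ℝ), ∀ xs : ℕ → X, IsDeltaPseudoOrbit d σ D δ xs →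
    ∃ x : X, (∀ j : ℕ, σ^[j] x ∈ D) ∧ ∀ i : ℕ, d (σ^[i] x) (xs i) < ε

/-- The Lipschitz shadowing property for the system `(X, σ, D)` with respect to `d`. -/
def HasLipschitzShadowing {X : Type*} (d : X → X → ℝ) (σ : X → X) (D : Set X) : Prop :=
  ∃ L > (0:ℝ), ∃ δ₀ > (0:ℝ), ∀ δ : ℝ, 0 < δ → δ ≤ δ₀ →
    ∀ xs : ℕ → X, IsDeltaPseudoOrbit d σ D δ xs →
      ∃ x : X, (∀ j : ℕ, σ^[j] x ∈ D) ∧ ∀ n : ℕ, d (σ^[n] x) (xs n) ≤ L * δ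

/-!
Call the position of a word in an enumeration, counted from `0`, its rank. Two points are at
distance less than `2⁻ᵐ` exactly when they have the same initial segments of rank less than `m`, so
any two OTW metrics are uniformly equivalent.

Suppose that deleting the first letter always lowers the rank. Then agreement on the words of rank
less than `m` is decided letter by letter, and the infinite word spelled by the first letters of a
`2⁻ᵐ`-pseudo-orbit shadows it to within `2⁻ᵐ`: shadowing is Lipschitz. Shadowing itself passes to
every other OTW metric by uniform equivalence.

To destroy the Lipschitz bound, give `a` and `aba` ranks below some `m` while every word starting
with `b` has rank at least `m + C`. Then `aba, b^∞, b^∞, …` is a `2⁻⁽ᵐ⁺ᶜ⁾`-pseudo-orbit, but a point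
that `2⁻ᵐ`-shadows it must start with `aba`, and its second shift then starts with `a` rather than
`b`. In the standard enumeration of the words over `ℕ`, the one-letter word `n` has rank
`n² + n + 1` and the least rank among words starting with `n`. Exchanging every `n+1` with
`0(n+2)0` therefore provides such `a` and `b` for every `C`.
-/

section Shadowing

variable {X : Type*} {d d' : X → X → ℝ} {σ : X → X} {D : Set X}

/-- Uniform continuity of the identity map from `(X, d)` to `(X, d')`, for distance functions that
are not required to be metrics. -/
def UniformlyDominates (d d' : X → X → ℝ) : Prop :=
  ∀ ε > (0 : ℝ), ∃ δ > (0 : ℝ), ∀ x y : X, d x y < δ → d' x y < ε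

theorem HasShadowing.of_uniformlyDominates (hd : HasShadowing d σ D)
    (hdd' : UniformlyDominates d d') (hd'd : UniformlyDominates d' d) :
    HasShadowing d' σ D := by
  intro ε hε
  obtain ⟨η, hη, dist_lt_ε⟩ := hdd' ε hε
  obtain ⟨θ, hθ, shadow⟩ := hd η hη
  obtain ⟨δ, hδ, dist_lt_θ⟩ := hd'd θ hθ
  refine ⟨δ, hδ, fun xs hxs => ?_⟩
  obtain ⟨x, hxD, hx⟩ := shadow xs fun n => ⟨(hxs n).1, dist_lt_θ _ _ (hxs n).2⟩
  exact ⟨x, hxD, fun n => dist_lt_ε _ _ (hx n)⟩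

theorem HasLipschitzShadowing.hasShadowing (h : HasLipschitzShadowing d σ D) :
    HasShadowing d σ D := by
  obtain ⟨L, hL, δ₀, hδ₀, shadow⟩ := h
  intro ε hε
  refine ⟨min δ₀ (ε / (2 * L)), by positivity, fun xs hxs => ?_⟩
  obtain ⟨x, hxD, hx⟩ := shadow _ (by positivity) (min_le_left _ _) xs hxs
  refine ⟨x, hxD, fun n => ?_⟩
  calc d (σ^[n] x) (xs n) ≤ L * min δ₀ (ε / (2 * L)) := hx n
    _ ≤ L * (ε / (2 * L)) := by gcongr; exact min_le_right _ _
    _ = ε / 2 := by field_simp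
    _ < ε := half_lt_self hε

theorem HasLipschitzShadowing.exists_dyadic_loss (h : HasLipschitzShadowing d σ D) :
    ∃ C : ℕ, ∀ (m : ℕ) (xs : ℕ → X), IsDeltaPseudoOrbit d σ D ((1 / 2) ^ (m + C)) xs →
      ∃ x, (∀ j, σ^[j] x ∈ D) ∧ ∀ n, d (σ^[n] x) (xs n) < (1 / 2) ^ m := by
  obtain ⟨L, hL, δ₀, hδ₀, shadow⟩ := h
  obtain ⟨C, hC⟩ := exists_pow_lt_of_lt_one (show 0 < min δ₀ (1 / L) by positivity)
    (one_half_lt_one (α := ℝ))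
  have pow_lt_δ₀ : (1 / 2 : ℝ) ^ C < δ₀ := hC.trans_le (min_le_left _ _)
  have mul_pow_lt_one : L * (1 / 2 : ℝ) ^ C < 1 :=
    (lt_div_iff₀' hL).1 (hC.trans_le (min_le_right _ _))
  refine ⟨C, fun m xs hxs => ?_⟩
  have pow_le_δ₀ : (1 / 2 : ℝ) ^ (m + C) ≤ δ₀ :=
    (pow_le_pow_of_le_one (by norm_num) (by norm_num) (Nat.le_add_left C m)).trans pow_lt_δ₀.le
  obtain ⟨x, hxD, hx⟩ := shadow _ (by positivity) pow_le_δ₀ xs hxs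
  refine ⟨x, hxD, fun n => ?_⟩
  calc d (σ^[n] x) (xs n) ≤ L * (1 / 2) ^ (m + C) := hx n
    _ = (L * (1 / 2) ^ C) * (1 / 2) ^ m := by ring
    _ < (1 / 2) ^ m := mul_lt_of_lt_one_left (by positivity) mul_pow_lt_one

theorem hasLipschitzShadowing_of_dyadic
    (h : ∀ (m : ℕ) (xs : ℕ → X), IsDeltaPseudoOrbit d σ D ((1 / 2) ^ m) xs →
      ∃ x, (∀ j, σ^[j] x ∈ D) ∧ ∀ n, d (σ^[n] x) (xs n) < (1 / 2) ^ m) :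
    HasLipschitzShadowing d σ D := by
  refine ⟨2, two_pos, 1, one_pos, fun δ hδ hδ_le_one xs hxs => ?_⟩
  obtain ⟨m, pow_succ_lt, le_pow⟩ := exists_nat_pow_near_of_lt_one hδ hδ_le_one
    (one_half_pos (α := ℝ)) one_half_lt_one
  obtain ⟨x, hxD, hx⟩ := h m xs fun n => ⟨(hxs n).1, (hxs n).2.trans_le le_pow⟩
  refine ⟨x, hxD, fun n => ?_⟩
  calc d (σ^[n] x) (xs n) ≤ (1 / 2) ^ m := (hx n).le
    _ = 2 * (1 / 2) ^ (m + 1) := by ring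
    _ ≤ 2 * δ := by gcongr

end Shadowing

namespace OTWFullShift

variable {A : Type*}

section InitialSegments

theorem otwPre_nil (x : OTWFullShift A) : OTWPre [] x := by
  rcases x with f | v
  · exact fun i => i.elim0
  · exact List.nil_prefix

theorem otwPre_cons_iff {a : A} {u : List A} {x : OTWFullShift A} :
    OTWPre (a :: u) x ↔ OTWPre [a] x ∧ OTWPre u (otwShift x) := by
  rcases x with f | _ | ⟨b, v⟩
  · simp [OTWPre, otwShift, Fin.forall_fin_succ]
  · simp [OTWPre]
  · simp [OTWPre, otwShift, List.cons_prefix_cons]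

theorem otwPre_singleton_inl_iff {a : A} {f : ℕ → A} :
    OTWPre [a] (Sum.inl f) ↔ a = f 0 := by
  simp [OTWPre]

theorem exists_otwPre_singleton_iff {x : OTWFullShift A} (hx : x ∈ otwDomain A) :
    ∃ b, ∀ a, OTWPre [a] x ↔ a = b := by
  rcases x with f | _ | ⟨b, v⟩
  · exact ⟨f 0, fun _ => otwPre_singleton_inl_iff⟩
  · exact absurd rfl hx
  · exact ⟨b, fun a => by simp [OTWPre]⟩

theorem otwPre_map_range (f : ℕ → A) (n : ℕ) :
    OTWPre ((List.range n).map f) (Sum.inl f) := by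
  intro i
  simp

theorem eq_of_forall_otwPre_iff {x y : OTWFullShift A}
    (h : ∀ u, OTWPre u x ↔ OTWPre u y) : x = y := by
  have not_finite (f : ℕ → A) (v : List A) :
      ¬ OTWPre ((List.range (v.length + 1)).map f) (Sum.inr v) := fun hpre => by
    simpa using List.IsPrefix.length_le hpre
  rcases x with f | v <;> rcases y with g | w
  · congr 1
    funext n
    simpa using (h _).1 (otwPre_map_range f (n + 1)) ⟨n, by simp⟩
  · exact absurd ((h _).1 (otwPre_map_range f _)) (not_finite f w)
  · exact absurd ((h _).2 (otwPre_map_range g _)) (not_finite g v)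
  · have hvw : v <+: w := (h v).1 List.prefix_rfl
    have hwv : w <+: v := (h w).2 List.prefix_rfl
    rw [hvw.eq_of_length_le hwv.length_le]

theorem iterate_otwShift_inl (f : ℕ → A) (n : ℕ) :
    otwShift^[n] (Sum.inl f) = Sum.inl fun k => f (k + n) := by
  induction n with
  | zero => rfl
  | succ n ih =>
    rw [Function.iterate_succ_apply', ih]
    simp only [otwShift, add_assoc, add_comm 1]

/-- `x` and `y` have the same initial segments among the words in `T`. With `T` the words of small
rank this is closeness in an OTW metric. -/
def AgreeOn (T : Set (List A)) (x y : OTWFullShift A) : Prop :=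
  ∀ u ∈ T, (OTWPre u x ↔ OTWPre u y)

theorem exists_agreeOn_orbit {T : Set (List A)} (tail_mem : ∀ a u, a :: u ∈ T → u ∈ T)
    {xs : ℕ → OTWFullShift A} (hD : ∀ n, xs n ∈ otwDomain A)
    (hxs : ∀ n, AgreeOn T (otwShift (xs n)) (xs (n + 1))) :
    ∃ x, (∀ j, otwShift^[j] x ∈ otwDomain A) ∧ ∀ n, AgreeOn T (otwShift^[n] x) (xs n) := by
  choose letter hletter using fun n => exists_otwPre_singleton_iff (hD n)
  refine ⟨Sum.inl letter, fun j => by simp [iterate_otwShift_inl, otwDomain], fun n u => ?_⟩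
  induction u generalizing n with
  | nil => simp only [otwPre_nil, implies_true]
  | cons a u ih =>
    intro hau
    have hu : u ∈ T := tail_mem a u hau
    have same_letter : OTWPre [a] (otwShift^[n] (Sum.inl letter)) ↔ OTWPre [a] (xs n) := by
      rw [iterate_otwShift_inl, otwPre_singleton_inl_iff, zero_add, hletter]
    rw [otwPre_cons_iff, otwPre_cons_iff (x := xs n), same_letter, hxs n u hu, ← ih (n + 1) hu,
      Function.iterate_succ_apply']

end InitialSegments

section Rank

/-- The enumeration of the finite words that lists them by increasing rank `E`. Ranks start at `0`
whereas enumerations start at `1`, hence the index `j - 1`; the value at `0` is junk. -/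
def enumerationOfRank (E : List A ≃ ℕ) (j : ℕ) : List A := E.symm (j - 1)

theorem isEnumeration_enumerationOfRank (E : List A ≃ ℕ) :
    IsEnumeration (enumerationOfRank E) :=
  E.symm.bijective

theorem otwDist_lt_pow_iff {E : List A ≃ ℕ} {x y : OTWFullShift A} {m : ℕ} :
    otwDist (enumerationOfRank E) x y < (1 / 2) ^ m ↔ AgreeOn {u | E u < m} x y := by
  unfold otwDist
  split_ifs with hxy
  · simp [hxy, AgreeOn]
  rw [pow_lt_pow_iff_right_of_lt_one₀ one_half_pos one_half_lt_one]
  let S := {j : ℕ | 1 ≤ j ∧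
    Xor (OTWPre (enumerationOfRank E j) x) (OTWPre (enumerationOfRank E j) y)}
  change m < sInf S ↔ _
  have mem_of_separates (u : List A) (hu : ¬ (OTWPre u x ↔ OTWPre u y)) : E u + 1 ∈ S :=
    ⟨Nat.le_add_left 1 _, (xor_iff_not_iff _ _).2 (by simpa [enumerationOfRank] using hu)⟩
  have S_nonempty : S.Nonempty := by
    obtain ⟨u, hu⟩ := not_forall.1 (mt eq_of_forall_otwPre_iff hxy)
    exact ⟨_, mem_of_separates u hu⟩
  constructor
  · intro hm u hu
    by_contra hsep
    exact (Nat.sInf_le (mem_of_separates u hsep)).not_gt (lt_of_le_of_lt hu hm)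
  · intro hagree
    by_contra! hm
    obtain ⟨one_le, hsep⟩ := Nat.sInf_mem S_nonempty
    have rank_lt : E (enumerationOfRank E (sInf S)) < m := by
      rw [enumerationOfRank, Equiv.apply_symm_apply]
      omega
    exact (xor_iff_not_iff _ _).1 hsep (hagree _ rank_lt)

theorem uniformlyDominates_otwDist (E F : List A ≃ ℕ) :
    UniformlyDominates (otwDist (enumerationOfRank E)) (otwDist (enumerationOfRank F)) := by
  intro ε hε
  obtain ⟨m, hm⟩ := exists_pow_lt_of_lt_one hε (one_half_lt_one (α := ℝ))
  obtain ⟨M, hM⟩ := ((Set.finite_lt_nat m).image (E ∘ F.symm)).bddAbove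
  have rank_le (u : List A) (hu : F u < m) : E u ≤ M := hM ⟨F u, hu, by simp⟩
  refine ⟨(1 / 2) ^ (M + 1), by positivity, fun x y hxy => lt_trans ?_ hm⟩
  rw [otwDist_lt_pow_iff] at hxy ⊢
  exact fun u hu => hxy u (Nat.lt_succ_of_le (rank_le u hu))

theorem hasLipschitzShadowing_of_rank_lt_rank_cons {E : List A ≃ ℕ}
    (hE : ∀ a u, E u < E (a :: u)) :
    HasLipschitzShadowing (otwDist (enumerationOfRank E)) otwShift (otwDomain A) := by
  refine hasLipschitzShadowing_of_dyadic fun m xs hxs => ?_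
  obtain ⟨x, hxD, hx⟩ := exists_agreeOn_orbit (T := {u | E u < m})
    (fun a u hau => (hE a u).trans hau) (fun n => (hxs n).1)
    (fun n => otwDist_lt_pow_iff.1 (hxs n).2)
  exact ⟨x, hxD, fun n => otwDist_lt_pow_iff.2 (hx n)⟩

end Rank

section Detour

/-- The pseudo-orbit `aba, b^∞, b^∞, …`, whose only error is in its first step, from `ba` to
`b^∞`. -/
def detour (a b : A) : ℕ → OTWFullShift A
  | 0 => Sum.inr [a, b, a]
  | _ + 1 => Sum.inl fun _ => b

theorem isDeltaPseudoOrbit_detour {E : List A ≃ ℕ} (a : A) {b : A} {k : ℕ}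
    (hb : ∀ u, k ≤ E (b :: u)) :
    IsDeltaPseudoOrbit (otwDist (enumerationOfRank E)) otwShift (otwDomain A) ((1 / 2) ^ k)
      (detour a b) := by
  rintro (_ | n) <;> refine ⟨by simp [detour, otwDomain], otwDist_lt_pow_iff.2 fun u hu => ?_⟩
  · cases u with
    | nil => simp only [otwPre_nil]
    | cons c u =>
      have hcb : c ≠ b := by
        rintro rfl
        exact (hb u).not_gt hu
      rw [otwPre_cons_iff, otwPre_cons_iff (x := detour a b 1)]
      simp [detour, otwShift, OTWPre, hcb]
  · rfl

theorem not_agreeOn_orbit_detour {T : Set (List A)} {a b : A} (hab : a ≠ b)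
    (ha : [a] ∈ T) (haba : [a, b, a] ∈ T) (x : OTWFullShift A) :
    ¬ ∀ n, AgreeOn T (otwShift^[n] x) (detour a b n) := by
  intro hx
  have hx₀ : OTWPre [a, b, a] x := (hx 0 _ haba).2 List.prefix_rfl
  have hx₂ : OTWPre [a] (otwShift^[2] x) := (otwPre_cons_iff.1 (otwPre_cons_iff.1 hx₀).2).2
  exact hab (otwPre_singleton_inl_iff.1 ((hx 2 _ ha).1 hx₂))

theorem not_hasLipschitzShadowing_of_detours {E : List A ≃ ℕ}
    (hE : ∀ C : ℕ, ∃ (m : ℕ) (a b : A), a ≠ b ∧ E [a] < m ∧ E [a, b, a] < m ∧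
      ∀ u, m + C ≤ E (b :: u)) :
    ¬ HasLipschitzShadowing (otwDist (enumerationOfRank E)) otwShift (otwDomain A) := by
  intro h
  obtain ⟨C, shadow⟩ := h.exists_dyadic_loss
  obtain ⟨m, a, b, hab, ha, haba, hb⟩ := hE C
  obtain ⟨x, -, hx⟩ := shadow m _ (isDeltaPseudoOrbit_detour a hb)
  exact not_agreeOn_orbit_detour hab ha haba x fun n => otwDist_lt_pow_iff.1 (hx n)

end Detour

section SwappedRank

open Encodable Denumerable

theorem encode_lt_encode_cons [Encodable A] (a : A) (u : List A) :
    encode u < encode (a :: u) := by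
  rw [encode_list_cons]
  exact Nat.lt_succ_of_le (Nat.right_le_pair _ _)

theorem encode_singleton (n : ℕ) : encode [n] = n * n + n + 1 := by
  simp [encode_list_cons, Nat.pair]

theorem encode_singleton_le_encode_cons [Encodable A] (a : A) (u : List A) :
    encode [a] ≤ encode (a :: u) := by
  rw [encode_list_cons, encode_list_cons, encode_list_nil]
  rcases Nat.eq_zero_or_pos (encode u) with hu | hu
  · rw [hu]
  · exact Nat.succ_le_succ (Nat.pair_lt_pair_right _ hu).le

/-- The involution of the words over `ℕ` that exchanges `(n+1)` with `0(n+2)0` for every `n`. -/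
def detourSwap : List ℕ → List ℕ
  | [n + 1] => [0, n + 2, 0]
  | [0, n + 2, 0] => [n + 1]
  | u => u

theorem detourSwap_involutive : Function.Involutive detourSwap := by
  intro u
  fun_cases detourSwap u <;> simp_all [detourSwap]

theorem encode_singleton_le_encode_detourSwap_cons (n : ℕ) (u : List ℕ) :
    encode [n + 2] ≤ encode (detourSwap ((n + 2) :: u)) := by
  cases u with
  | nil =>
    calc encode [n + 2] ≤ encode [n + 3] := by
          rw [encode_singleton, encode_singleton]; gcongr <;> omega
      _ ≤ encode [n + 3, 0] := encode_singleton_le_encode_cons _ _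
      _ ≤ encode [0, n + 3, 0] := (encode_lt_encode_cons _ _).le
  | cons k u => exact encode_singleton_le_encode_cons (n + 2) (k :: u)

variable (A) [Denumerable A]

/-- The standard rank of words over a denumerable alphabet, precomposed with `detourSwap`. -/
def swappedRank : List A ≃ ℕ :=
  (Equiv.listEquivOfEquiv (eqv A)).trans (detourSwap_involutive.toPerm.trans (eqv (List ℕ)))

theorem swappedRank_apply (u : List A) :
    swappedRank A u = encode (detourSwap (u.map encode)) :=
  rfl

theorem exists_detour_swappedRank (C : ℕ) :
    ∃ (m : ℕ) (a b : A), a ≠ b ∧ swappedRank A [a] < m ∧ swappedRank A [a, b, a] < m ∧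
      ∀ u, m + C ≤ swappedRank A (b :: u) := by
  refine ⟨encode [C + 1] + 1, ofNat A 0, ofNat A (C + 2), ?_, ?_, ?_, fun u => ?_⟩
  · intro h
    simpa using congrArg encode h
  · simp [swappedRank_apply, detourSwap, Nat.pair]
  · simp [swappedRank_apply, detourSwap]
  · calc encode [C + 1] + 1 + C ≤ encode [C + 2] := by
          rw [encode_singleton, encode_singleton]; nlinarith
      _ ≤ encode (detourSwap ((C + 2) :: u.map encode)) :=
          encode_singleton_le_encode_detourSwap_cons C _
      _ = swappedRank A (ofNat A (C + 2) :: u) := by simp [swappedRank_apply]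

end SwappedRank

end OTWFullShift

open OTWFullShift in
/-- There exist two enumerations `P` and `Q` of `Σ_A^fin` whose OTW metrics are
uniformly equivalent, such that the OTW full shift (with domain
`D = Σ_A ∖ {∅}`) has the Lipschitz shadowing property with respect to `d_P`,
while with respect to `d_Q` it has the shadowing property but NOT the Lipschitz
shadowing property. -/
theorem otw_lipschitz_shadowing_metric_dependent
    {A : Type*} [Countable A] [Infinite A] :
    ∃ P Q : ℕ → List A, IsEnumeration P ∧ IsEnumeration Q ∧
      (∀ ε > (0:ℝ), ∃ δ > (0:ℝ), ∀ x y : OTWFullShift A,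
        otwDist P x y < δ → otwDist Q x y < ε) ∧
      (∀ ε > (0:ℝ), ∃ δ > (0:ℝ), ∀ x y : OTWFullShift A,
        otwDist Q x y < δ → otwDist P x y < ε) ∧
      HasLipschitzShadowing (otwDist P) otwShift (otwDomain A) ∧
      HasShadowing (otwDist Q) otwShift (otwDomain A) ∧
      ¬ HasLipschitzShadowing (otwDist Q) otwShift (otwDomain A) := by
  obtain ⟨_⟩ := nonempty_denumerable A
  let E : List A ≃ ℕ := Denumerable.eqv (List A)
  let F : List A ≃ ℕ := swappedRank A
  have lipschitz_E :
      HasLipschitzShadowing (otwDist (enumerationOfRank E)) otwShift (otwDomain A) :=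
    hasLipschitzShadowing_of_rank_lt_rank_cons encode_lt_encode_cons
  have E_dominates_F := uniformlyDominates_otwDist E F
  have F_dominates_E := uniformlyDominates_otwDist F E
  exact ⟨enumerationOfRank E, enumerationOfRank F,
    isEnumeration_enumerationOfRank E, isEnumeration_enumerationOfRank F,
    E_dominates_F, F_dominates_E, lipschitz_E,
    lipschitz_E.hasShadowing.of_uniformlyDominates E_dominates_F F_dominates_E,
    not_hasLipschitzShadowing_of_detours (exists_detour_swappedRank A)⟩
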